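/- arXiv:2605.21358 — 3 statements merged into one kernel-verified Lean document; each statement's English description precedes it below -/
import Mathlib

section
/- Let β ∈ (0,1), let φ : ZMod 12 → ℝ satisfy 0 < φ_m < 1 for all m, let Φ = ∏_{j=1}^{12} φ_j, and for r = 1,…,12 define the weights w_{m,r} = β^r (∏_{j=1}^{r−1} φ_{m+j}) (1 − φ_{m+r}) / (1 − β^{12} Φ). Then for any X : ZMod 12 → ℝ, the function D_m = Σ_{r=1}^{12} w_{m,r} X_{m+r} is the unique function from ZMod 12 to ℝ satisfying the 12-periodic recursion D_m = β φ_{m+1} D_{m+1} + β (1 − φ_{m+1}) X_{m+1} for all m. -/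
open Finset

/-- `Φ = ∏_{j=1}^{12} φ_j`. -/
noncomputable def Phi (φ : ZMod 12 → ℝ) : ℝ := ∏ j : ZMod 12, φ j

/-- The weights `w_{m,r} = β^r (∏_{j=1}^{r−1} φ_{m+j}) (1 − φ_{m+r}) / (1 − β^{12} Φ)`. -/
noncomputable def wgt (β : ℝ) (φ : ZMod 12 → ℝ) (m : ZMod 12) (r : ℕ) : ℝ :=
  β ^ r * (∏ j ∈ Finset.range (r - 1), φ (m + ((j : ZMod 12) + 1))) *
    (1 - φ (m + (r : ZMod 12))) / (1 - β ^ 12 * Phi φ)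

/-- The intercept `D_m = Σ_{r=1}^{12} w_{m,r} X_{m+r}`. -/
noncomputable def Dint (β : ℝ) (φ : ZMod 12 → ℝ) (X : ZMod 12 → ℝ) (m : ZMod 12) : ℝ :=
  ∑ r ∈ Finset.Icc 1 12, wgt β φ m r * X (m + (r : ZMod 12))

/-!
A recursion `x m = a m * x (m + 1) + b m`, unrolled once around the cycle `ZMod n`, reads
`x m = S m + P * x m`, where `P` is the product of all the coefficients and `S m` involves only
`a` and `b`; if `P ≠ 1`, this forces `x = S / (1 - P)`. Conversely, splitting off the first and the
last term of the sum of `n + 1` terms starting at `m` gives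
`a m * S (m + 1) + b m = S m + P * b m`, so that `S / (1 - P)` does solve the recursion.
For `a m = β * φ (m + 1)` one has `P = β ^ 12 * Φ`.
-/

section Unrolling

variable {ι R : Type*} [AddMonoidWithOne ι] [CommSemiring R]

/-- The inhomogeneous part of `x m` after unrolling the recursion `x m = a m * x (m + 1) + b m`
for `k` steps. -/
def unrolledSum (a b : ι → R) (k : ℕ) (m : ι) : R :=
  ∑ i ∈ range k, (∏ j ∈ range i, a (m + j)) * b (m + i)

theorem unrolledSum_succ (a b : ι → R) (k : ℕ) (m : ι) :
    unrolledSum a b (k + 1) m =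
      unrolledSum a b k m + (∏ j ∈ range k, a (m + j)) * b (m + k) :=
  sum_range_succ _ k

theorem unrolledSum_succ' (a b : ι → R) (k : ℕ) (m : ι) :
    unrolledSum a b (k + 1) m = a m * unrolledSum a b k (m + 1) + b m := by
  have h_index (i : ℕ) : m + ((i + 1 : ℕ) : ι) = m + 1 + i := by
    rw [add_comm i 1, Nat.cast_add, Nat.cast_one, add_assoc]
  simp only [unrolledSum, sum_range_succ', prod_range_succ', h_index, mul_sum, range_zero,
    prod_empty, Nat.cast_zero, add_zero, one_mul]
  congr! 2
  ring

theorem eq_unrolledSum_add_prod_mul {a b x : ι → R} (hx : ∀ m, x m = a m * x (m + 1) + b m)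
    (k : ℕ) (m : ι) :
    x m = unrolledSum a b k m + (∏ j ∈ range k, a (m + j)) * x (m + k) := by
  induction k with
  | zero => simp [unrolledSum]
  | succ k ih =>
    rw [ih, unrolledSum_succ, prod_range_succ, hx (m + k), Nat.cast_succ, add_assoc m]
    ring

end Unrolling

section Cyclic

variable {n : ℕ} [NeZero n]

theorem prod_range_add_natCast_zmod {M : Type*} [CommMonoid M] (f : ZMod n → M) (m : ZMod n) :
    ∏ j ∈ range n, f (m + j) = ∏ j, f j :=
  calc
    ∏ j ∈ range n, f (m + j) = ∏ j : ZMod n, f (m + j) :=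
      prod_nbij' Nat.cast ZMod.val (fun _ _ => mem_univ _)
        (fun j _ => mem_range.2 j.val_lt)
        (fun _ hj => ZMod.val_cast_of_lt (mem_range.1 hj))
        (fun j _ => ZMod.natCast_zmod_val j) (fun _ _ => rfl)
    _ = ∏ j, f j := Equiv.prod_comp (Equiv.addLeft m) f

variable {K : Type*} [Field K]

/-- The solution of the recursion `x m = a m * x (m + 1) + b m` on the cycle `ZMod n`, provided
that `∏ j, a j ≠ 1`; it is the junk value `0` if `∏ j, a j = 1`. -/
def cyclicSolution (a b : ZMod n → K) (m : ZMod n) : K :=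
  unrolledSum a b n m / (1 - ∏ j, a j)

theorem cyclicSolution_eq_mul_add {a : ZMod n → K} (ha : ∏ j, a j ≠ 1) (b : ZMod n → K)
    (m : ZMod n) :
    cyclicSolution a b m = a m * cyclicSolution a b (m + 1) + b m := by
  have h_ne : 1 - ∏ j, a j ≠ 0 := sub_ne_zero.2 ha.symm
  have h_split : unrolledSum a b n m + (∏ j, a j) * b m =
      a m * unrolledSum a b n (m + 1) + b m := by
    rw [← unrolledSum_succ', unrolledSum_succ, prod_range_add_natCast_zmod, ZMod.natCast_self,
      add_zero]
  rw [cyclicSolution, cyclicSolution]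
  field_simp
  linear_combination h_split

theorem eq_cyclicSolution {a b x : ZMod n → K} (ha : ∏ j, a j ≠ 1)
    (hx : ∀ m, x m = a m * x (m + 1) + b m) : x = cyclicSolution a b := by
  funext m
  have h_unroll := eq_unrolledSum_add_prod_mul hx n m
  rw [prod_range_add_natCast_zmod, ZMod.natCast_self, add_zero] at h_unroll
  rw [cyclicSolution, eq_div_iff (sub_ne_zero.2 ha.symm)]
  linear_combination h_unroll

end Cyclic

theorem prod_mul_add_one_eq_pow_mul_Phi (β : ℝ) (φ : ZMod 12 → ℝ) :
    ∏ m, β * φ (m + 1) = β ^ 12 * Phi φ := by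
  rw [prod_mul_distrib, prod_const, card_univ, ZMod.card, Phi]
  congr 1
  exact Equiv.prod_comp (Equiv.addRight 1) φ

theorem Dint_eq_cyclicSolution (β : ℝ) (φ X : ZMod 12 → ℝ) :
    Dint β φ X =
      cyclicSolution (fun m => β * φ (m + 1)) (fun m => β * (1 - φ (m + 1)) * X (m + 1)) := by
  funext m
  rw [Dint, cyclicSolution, prod_mul_add_one_eq_pow_mul_Phi, unrolledSum, sum_div,
    range_eq_Ico, ← Ico_add_one_right_eq_Icc, ← sum_Ico_add' _ 0 12 1]
  refine sum_congr rfl fun i _ => ?_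
  simp only [wgt, Nat.add_sub_cancel, Nat.cast_add, Nat.cast_one, prod_mul_distrib, prod_const,
    card_range, add_assoc]
  ring

theorem pow_mul_Phi_lt_one {β : ℝ} (hβ₀ : 0 ≤ β) (hβ₁ : β < 1) {φ : ZMod 12 → ℝ}
    (hφ₀ : ∀ m, 0 ≤ φ m) (hφ₁ : ∀ m, φ m ≤ 1) : β ^ 12 * Phi φ < 1 :=
  mul_lt_one_of_nonneg_of_lt_one_left (pow_nonneg hβ₀ 12)
    (pow_lt_one₀ hβ₀ hβ₁ (by norm_num)) (prod_le_one (fun m _ => hφ₀ m) fun m _ => hφ₁ m)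

theorem stmt2_general (β : ℝ) (φ : ZMod 12 → ℝ) (hβφ : β ^ 12 * Phi φ ≠ 1)
    (X : ZMod 12 → ℝ) :
    (∀ m, Dint β φ X m =
        β * φ (m + 1) * Dint β φ X (m + 1) + β * (1 - φ (m + 1)) * X (m + 1)) ∧
    ∀ D' : ZMod 12 → ℝ,
      (∀ m, D' m = β * φ (m + 1) * D' (m + 1) + β * (1 - φ (m + 1)) * X (m + 1)) →
      D' = Dint β φ X := by
  have h_prod : ∏ m, β * φ (m + 1) ≠ 1 := by rwa [prod_mul_add_one_eq_pow_mul_Phi]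
  rw [Dint_eq_cyclicSolution]
  exact ⟨cyclicSolution_eq_mul_add h_prod _, fun _ hD' => eq_cyclicSolution h_prod hD'⟩

theorem stmt2 (β : ℝ) (hβ : 0 < β ∧ β < 1) (φ : ZMod 12 → ℝ)
    (hφ : ∀ m, 0 < φ m ∧ φ m < 1) (X : ZMod 12 → ℝ) :
    (∀ m, Dint β φ X m =
        β * φ (m + 1) * Dint β φ X (m + 1) + β * (1 - φ (m + 1)) * X (m + 1)) ∧
    ∀ D' : ZMod 12 → ℝ,
      (∀ m, D' m = β * φ (m + 1) * D' (m + 1) + β * (1 - φ (m + 1)) * X (m + 1)) →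
      D' = Dint β φ X :=
  stmt2_general β φ
    (pow_mul_Phi_lt_one hβ.1.le hβ.2 (fun m => (hφ m).1.le) fun m => (hφ m).2.le).ne X
end

section
/- Let β ∈ (0,1), u > 0, and A_max ≥ 1, and set v̄ > 0, X̲ = u/(1 − β), and X̄ = u/(1 − β) + A_max v̄ / (2(1 − β)). Then for every X with X̲ ≤ X ≤ X̄, every v with 0 < v ≤ v̄, every e with 0 ≤ e ≤ v, and every a with 0 ≤ a ≤ A_max, the updated mover value satisfies X̲ ≤ β X + u + (a/2)(v − e)²/v ≤ X̄. -/
/-!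
The point `b / (1 - β)` is fixed by `X ↦ β * X + b`, and this map is monotone in both `X` and `b`.
The search surplus `a / 2 * (v - e) ^ 2 / v` lies between `0` and `Amax * vbar / 2`, because
`|v - e| ≤ v`. So the update lies between the affine maps with `b = u` and
`b = u + Amax * vbar / 2`, whose fixed points are the two bounds on the mover value.
-/

section FixedPoint

variable {K : Type*} [Field K] {β : K}

theorem mul_div_one_sub_add_self (hβ : β ≠ 1) (b : K) :
    β * (b / (1 - β)) + b = b / (1 - β) := by
  have hβ' : 1 - β ≠ 0 := sub_ne_zero.2 hβ.symm
  field_simp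
  ring

variable [LinearOrder K] [IsStrictOrderedRing K] {b c X : K}

theorem div_one_sub_le_mul_add (hβ₀ : 0 ≤ β) (hβ₁ : β ≠ 1) (hX : b / (1 - β) ≤ X) (hbc : b ≤ c) :
    b / (1 - β) ≤ β * X + c :=
  calc
    b / (1 - β) = β * (b / (1 - β)) + b := (mul_div_one_sub_add_self hβ₁ b).symm
    _ ≤ β * X + c := by gcongr

theorem mul_add_le_div_one_sub (hβ₀ : 0 ≤ β) (hβ₁ : β ≠ 1) (hX : X ≤ b / (1 - β)) (hcb : c ≤ b) :
    β * X + c ≤ b / (1 - β) :=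
  calc
    β * X + c ≤ β * (b / (1 - β)) + b := by gcongr
    _ = b / (1 - β) := mul_div_one_sub_add_self hβ₁ b

end FixedPoint

section Surplus

variable {K : Type*} [Field K] [LinearOrder K] [IsStrictOrderedRing K]

theorem sq_div_le_of_abs_le {x v : K} (hv : 0 < v) (hx : |x| ≤ v) : x ^ 2 / v ≤ v := by
  rw [div_le_iff₀ hv, ← sq]
  exact sq_le_sq' (abs_le.1 hx).1 (abs_le.1 hx).2

theorem half_mul_sq_div_le {a A x v w : K} (ha : 0 ≤ a) (haA : a ≤ A) (hv : 0 < v) (hvw : v ≤ w)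
    (hx : |x| ≤ v) : a / 2 * x ^ 2 / v ≤ A * w / 2 := by
  have hA : 0 ≤ A := ha.trans haA
  calc
    a / 2 * x ^ 2 / v = a / 2 * (x ^ 2 / v) := mul_div_assoc _ _ _
    _ ≤ A / 2 * w := by
      gcongr
      exact (sq_div_le_of_abs_le hv hx).trans hvw
    _ = A * w / 2 := div_mul_eq_mul_div _ _ _

end Surplus

theorem stmt8_general {K : Type*} [Field K] [LinearOrder K] [IsStrictOrderedRing K]
    {β u Amax vbar X v e a : K} (hβ₀ : 0 ≤ β) (hβ₁ : β ≠ 1)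
    (hX : X ∈ Set.Icc (u / (1 - β)) (u / (1 - β) + Amax * vbar / (2 * (1 - β))))
    (hv : 0 < v) (hvbar : v ≤ vbar) (he : |v - e| ≤ v) (ha : 0 ≤ a) (haA : a ≤ Amax) :
    β * X + u + a / 2 * (v - e) ^ 2 / v ∈
      Set.Icc (u / (1 - β)) (u / (1 - β) + Amax * vbar / (2 * (1 - β))) := by
  have hupper : u / (1 - β) + Amax * vbar / (2 * (1 - β)) =
      (u + Amax * vbar / 2) / (1 - β) := by
    rw [add_div, div_div]
  have hsurplus_nonneg : 0 ≤ a / 2 * (v - e) ^ 2 / v := by positivity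
  have hsurplus_le : a / 2 * (v - e) ^ 2 / v ≤ Amax * vbar / 2 :=
    half_mul_sq_div_le ha haA hv hvbar he
  rw [hupper] at hX ⊢
  rw [add_assoc]
  exact ⟨div_one_sub_le_mul_add hβ₀ hβ₁ hX.1 (le_add_of_nonneg_right hsurplus_nonneg),
    mul_add_le_div_one_sub hβ₀ hβ₁ hX.2 (by gcongr)⟩

theorem stmt8 (β u Amax vbar : ℝ) (hβ : 0 < β ∧ β < 1) (hu : 0 < u)
    (hA : 1 ≤ Amax) (hvbar : 0 < vbar) :
    ∀ X v e a : ℝ,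
      u / (1 - β) ≤ X → X ≤ u / (1 - β) + Amax * vbar / (2 * (1 - β)) →
      0 < v → v ≤ vbar → 0 ≤ e → e ≤ v → 0 ≤ a → a ≤ Amax →
      u / (1 - β) ≤ β * X + u + a / 2 * (v - e) ^ 2 / v ∧
      β * X + u + a / 2 * (v - e) ^ 2 / v ≤
        u / (1 - β) + Amax * vbar / (2 * (1 - β)) := by
  intro X v e a hXl hXu hv hvv he hev ha haA
  exact stmt8_general hβ.1.le hβ.2.ne ⟨hXl, hXu⟩ hv hvv (abs_le.2 ⟨by linarith, by linarith⟩) ha haA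
end

section
/- (Existence and uniqueness of the housing market equilibrium.) Let β ∈ (0,1), u > 0, and let φ : ZMod 12 → ℝ satisfy 0 < φ_m < 1 for all m. Define Φ = ∏_{j=1}^{12} φ_j, A_m = (Σ_{s=0}^{11} β^s ∏_{j=1}^{s} φ_{m+j}) / (1 − β^{12} Φ), w_{m,r} = β^r (∏_{j=1}^{r−1} φ_{m+j}) (1 − φ_{m+r}) / (1 − β^{12} Φ), φ_max = max_m φ_m, φ_min = min_m φ_m, A_max = max_m A_m, v̲ = 1 − φ_max, v̄ = (1 − φ_min)/(1 − φ_max), X̲ = u/(1 − β), X̄ = u/(1 − β) + A_max v̄/(2(1 − β)), and K = [X̲, X̄]^{12} × [v̲, v̄]^{12}. Define T on K by: D_m = Σ_{r=1}^{12} w_{m,r} X_{m+r}, ε_m = (β X_{m+1} + u − D_m)/A_m, ε̄_m = min(max(ε_m, 0), v_m), ṽ_m = 1 − φ_m + φ_m ε̄_{m−1}, X̃_m = β X_{m+1} + u + (A_m/2)(v_m − ε̄_m)²/v_m, T(X, v) = (X̃, ṽ). Then T has exactly one fixed point in K; equivalently, the 12-periodic housing market equilibrium exists and is unique. -/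
open Finset

/-- The slope `A_m = (Σ_{s=0}^{11} β^s ∏_{j=1}^{s} φ_{m+j}) / (1 − β^{12} Φ)`. -/
noncomputable def Aslope (β : ℝ) (φ : ZMod 12 → ℝ) (m : ZMod 12) : ℝ :=
  (∑ s ∈ Finset.range 12, β ^ s * ∏ j ∈ Finset.range s, φ (m + ((j : ZMod 12) + 1))) /
    (1 - β ^ 12 * Phi φ)

/-- The provisional reservation cutoff `ε_m = (β X_{m+1} + u − D_m)/A_m`. -/
noncomputable def epsProv (β u : ℝ) (φ X : ZMod 12 → ℝ) (m : ZMod 12) : ℝ :=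
  (β * X (m + 1) + u - Dint β φ X m) / Aslope β φ m

/-- The clamped reservation cutoff `ε̄_m = min(max(ε_m, 0), v_m)`. -/
noncomputable def epsBar (β u : ℝ) (φ X v : ZMod 12 → ℝ) (m : ZMod 12) : ℝ :=
  min (max (epsProv β u φ X m) 0) (v m)

/-- The updated vacancy stock `ṽ_m = 1 − φ_m + φ_m ε̄_{m−1}`. -/
noncomputable def vTilde (β u : ℝ) (φ X v : ZMod 12 → ℝ) (m : ZMod 12) : ℝ :=
  1 - φ m + φ m * epsBar β u φ X v (m - 1)

/-- The updated mover value `X̃_m = β X_{m+1} + u + (A_m/2)(v_m − ε̄_m)²/v_m`. -/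
noncomputable def XTilde (β u : ℝ) (φ X v : ZMod 12 → ℝ) (m : ZMod 12) : ℝ :=
  β * X (m + 1) + u + Aslope β φ m / 2 * (v m - epsBar β u φ X v m) ^ 2 / v m

/-! Let `e` be the reservation cutoffs of a fixed point and `A` the slopes. Since `A` and `D`
solve linear recursions along the calendar, eliminating the mover values `X` leaves
`A m * e m = u + β * φ (m + 1) * A (m + 1) * E max(e (m + 1), x)` with `x` uniform on
`[0, v (m + 1)]`, together with the vacancy law `v m = 1 - φ m + φ m * min (e (m - 1)) (v (m - 1))`.
The expectation is `1`-Lipschitz in `(e, v)` for the sup norm, and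
`β * φ (m + 1) * A (m + 1) / A m = 1 - 1 / A m < 1`, so this reduced system is a contraction of the
whole space and has exactly one solution. Given `(e, v)`, the mover values solve
`X m = β * X (m + 1) + c m` for a known `c`, hence exist and are unique. The bounds defining `K`
hold at every fixed point by a comparison principle for such recursions. -/

section Comparison

variable {ι : Type*} [Finite ι] {c : ι → ℝ}

lemma le_of_le_mul_comp_add (σ : ι → ι) (hc₀ : ∀ m, 0 ≤ c m) (hc₁ : ∀ m, c m < 1)
    {b x y : ι → ℝ} (hx : ∀ m, x m ≤ c m * x (σ m) + b m)
    (hy : ∀ m, c m * y (σ m) + b m ≤ y m) (m : ι) : x m ≤ y m := by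
  have : Nonempty ι := ⟨m⟩
  obtain ⟨k, hk⟩ := Finite.exists_max fun m => x m - y m
  have hstep : x k - y k ≤ c k * (x k - y k) := calc
    x k - y k ≤ c k * (x (σ k) - y (σ k)) := by linarith [hx k, hy k]
    _ ≤ c k * (x k - y k) := mul_le_mul_of_nonneg_left (hk (σ k)) (hc₀ k)
  have hmax : x k - y k ≤ 0 := by nlinarith [hc₁ k]
  linarith [hk m]

lemma eq_of_eq_mul_comp_add (σ : ι → ι) (hc₀ : ∀ m, 0 ≤ c m) (hc₁ : ∀ m, c m < 1)
    {b x y : ι → ℝ} (hx : ∀ m, x m = c m * x (σ m) + b m)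
    (hy : ∀ m, y m = c m * y (σ m) + b m) : x = y :=
  funext fun m => le_antisymm
    (le_of_le_mul_comp_add σ hc₀ hc₁ (fun k => (hx k).le) (fun k => (hy k).ge) m)
    (le_of_le_mul_comp_add σ hc₀ hc₁ (fun k => (hy k).le) (fun k => (hx k).ge) m)

lemma exists_eq_mul_comp_add (σ : ι → ι) (hc₀ : ∀ m, 0 ≤ c m) (hc₁ : ∀ m, c m < 1)
    (b : ι → ℝ) : ∃ x : ι → ℝ, ∀ m, x m = c m * x (σ m) + b m := by
  let L : (ι → ℝ) →ₗ[ℝ] ι → ℝ :=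
    LinearMap.id - LinearMap.mulLeft ℝ c ∘ₗ LinearMap.funLeft ℝ ℝ σ
  have hL : ∀ x m, L x m = x m - c m * x (σ m) := fun _ _ => rfl
  have hinj : Function.Injective L := fun x y hxy =>
    eq_of_eq_mul_comp_add σ hc₀ hc₁ (b := L y)
      (fun m => by rw [← hxy, hL]; ring) (fun m => by rw [hL]; ring)
  obtain ⟨x, hx⟩ := LinearMap.injective_iff_surjective.1 hinj b
  exact ⟨x, fun m => by rw [← hx, hL]; ring⟩

lemma vacancy_mem_Icc (τ : ι → ι) {φ a v : ι → ℝ} (hφ₀ : ∀ m, 0 ≤ φ m) (hφ₁ : ∀ m, φ m < 1)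
    (ha : ∀ m, 0 ≤ a m) (hv : ∀ m, v m = 1 - φ m + φ m * min (a m) (v (τ m))) (m : ι) :
    v m ∈ Set.Icc (1 - φ m) 1 := by
  have hneg : ∀ m, max (-v m) 0 ≤ 0 :=
    le_of_le_mul_comp_add τ hφ₀ hφ₁ (b := 0) (x := fun m => max (-v m) 0) (y := 0)
      (fun m => by
        have hmin : -max (-v (τ m)) 0 ≤ min (a m) (v (τ m)) :=
          le_min (by linarith [ha m, le_max_right (-v (τ m)) 0])
            (by linarith [le_max_left (-v (τ m)) 0])
        have := mul_le_mul_of_nonneg_left hmin (hφ₀ m)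
        have := mul_nonneg (hφ₀ m) (le_max_right (-v (τ m)) 0)
        rw [Pi.zero_apply, add_zero]
        exact max_le (by linarith [hv m, hφ₁ m]) this)
      (fun m => by simp)
  have hnonneg : ∀ m, 0 ≤ v m := fun m => neg_nonpos.1 ((le_max_left _ _).trans (hneg m))
  refine ⟨?_, le_of_le_mul_comp_add τ hφ₀ hφ₁ (b := fun m => 1 - φ m) (y := fun _ => 1)
    (fun m => ?_) (fun m => by simp) m⟩
  · have := mul_nonneg (hφ₀ m) (le_min (ha m) (hnonneg (τ m)))
    linarith [hv m]
  · have := mul_le_mul_of_nonneg_left (min_le_right (a m) (v (τ m))) (hφ₀ m)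
    linarith [hv m]

lemma mem_Icc_of_eq_mul_comp_add (σ : ι → ι) {β a b : ℝ} (hβ₀ : 0 ≤ β) (hβ₁ : β < 1)
    {x g : ι → ℝ} (hg : ∀ m, g m ∈ Set.Icc a b) (hx : ∀ m, x m = β * x (σ m) + g m) (m : ι) :
    x m ∈ Set.Icc (a / (1 - β)) (b / (1 - β)) := by
  have hfix : ∀ t : ℝ, β * (t / (1 - β)) + t = t / (1 - β) := fun t => by
    have : 1 - β ≠ 0 := (sub_pos.2 hβ₁).ne'
    field_simp
    ring
  exact ⟨le_of_le_mul_comp_add σ (fun _ => hβ₀) (fun _ => hβ₁) (b := fun _ => a)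
      (x := fun _ => a / (1 - β)) (fun _ => (hfix a).ge)
      (fun k => by linarith [hx k, (hg k).1]) m,
    le_of_le_mul_comp_add σ (fun _ => hβ₀) (fun _ => hβ₁) (b := fun _ => b)
      (y := fun _ => b / (1 - β)) (fun k => by linarith [hx k, (hg k).2])
      (fun _ => (hfix b).le) m⟩

end Comparison

section PeriodicRecursion

lemma prod_range_succ_shift {R M : Type*} [AddCommMonoidWithOne R] [CommMonoid M] (f : R → M)
    (m : R) (s : ℕ) :
    ∏ j ∈ range (s + 1), f (m + ((j : R) + 1)) =
      f (m + 1) * ∏ j ∈ range s, f (m + 1 + ((j : R) + 1)) := by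
  rw [prod_range_succ', mul_comm, Nat.cast_zero, zero_add]
  refine congrArg _ (prod_congr rfl fun j _ => congrArg f ?_)
  push_cast
  abel

variable {n : ℕ} [NeZero n]

lemma prod_range_shift_eq_prod_univ {M : Type*} [CommMonoid M] (f : ZMod n → M) (m : ZMod n) :
    ∏ j ∈ range n, f (m + ((j : ZMod n) + 1)) = ∏ j, f j := by
  rw [← ((Equiv.addRight 1).trans (Equiv.addLeft m)).prod_comp f]
  refine prod_nbij (fun j : ℕ => (j : ZMod n)) (fun _ _ => mem_univ _) (fun i hi j hj hij => ?_)
    (fun k _ => ⟨k.val, by simpa using k.val_lt, k.natCast_zmod_val⟩) (fun _ _ => rfl)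
  rw [← ZMod.val_cast_of_lt (mem_range.1 hi), ← ZMod.val_cast_of_lt (mem_range.1 hj)]
  exact congrArg ZMod.val hij

variable {F : Type*} [Field F]

/-- The closed form of the `n`-periodic solution of the forward recursion
`y m = g m + q (m + 1) * y (m + 1)`. -/
def periodicSolution (q g : ZMod n → F) (m : ZMod n) : F :=
  (∑ s ∈ range n, (∏ j ∈ range s, q (m + ((j : ZMod n) + 1))) * g (m + s)) / (1 - ∏ j, q j)

lemma periodicSolution_eq {q : ZMod n → F} (hq : ∏ j, q j ≠ 1) (g : ZMod n → F) (m : ZMod n) :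
    periodicSolution q g m = g m + q (m + 1) * periodicSolution q g (m + 1) := by
  let S : ZMod n → ℕ → F := fun m k =>
    ∑ s ∈ range k, (∏ j ∈ range s, q (m + ((j : ZMod n) + 1))) * g (m + s)
  -- The sum over `s ≤ n`, with its last term split off on the left and its first on the right.
  have hS : S m n + (∏ j, q j) * g m = g m + q (m + 1) * S (m + 1) n := calc
    S m n + (∏ j, q j) * g m = S m (n + 1) := by
      simp only [S, sum_range_succ _ n, prod_range_shift_eq_prod_univ, CharP.cast_eq_zero,
        add_zero]
    _ = g m + q (m + 1) * S (m + 1) n := by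
      simp only [S, sum_range_succ', prod_range_succ_shift, mul_sum, range_zero, prod_empty,
        Nat.cast_zero, add_zero, one_mul, Nat.cast_add_one]
      rw [add_comm]
      refine congrArg _ (sum_congr rfl fun s _ => ?_)
      rw [mul_assoc, add_assoc m 1, add_comm 1 (s : ZMod n)]
  have hden : 1 - ∏ j, q j ≠ 0 := sub_ne_zero.2 hq.symm
  change S m n / _ = g m + q (m + 1) * (S (m + 1) n / _)
  field_simp
  linear_combination hS

end PeriodicRecursion

section SearchValue

/-- The expected value `E max(e, x)` of a draw `x`, uniform on `[0, v]`, which may be rejected in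
favour of `e`. Substituting `x = v * t` makes it meaningful, and `1`-Lipschitz, for all real
`e` and `v`. -/
noncomputable def searchValue (e v : ℝ) : ℝ := ∫ t in (0 : ℝ)..1, max e (v * t)

lemma intervalIntegrable_max_mul (e v a b : ℝ) :
    IntervalIntegrable (fun t => max e (v * t)) MeasureTheory.volume a b :=
  (by fun_prop : Continuous fun t : ℝ => max e (v * t)).intervalIntegrable a b

lemma le_searchValue (e v : ℝ) : e ≤ searchValue e v := by
  have h := intervalIntegral.integral_mono_on zero_le_one intervalIntegrable_const
    (intervalIntegrable_max_mul e v 0 1) (fun t _ => le_max_left e (v * t))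
  simpa [searchValue] using h

lemma abs_searchValue_sub_le (e v e' v' : ℝ) :
    |searchValue e v - searchValue e' v'| ≤ max |e - e'| |v - v'| := by
  rw [searchValue, searchValue, ← intervalIntegral.integral_sub
    (intervalIntegrable_max_mul e v 0 1) (intervalIntegrable_max_mul e' v' 0 1)]
  have hbound : ∀ t ∈ Set.uIoc (0 : ℝ) 1,
      ‖max e (v * t) - max e' (v' * t)‖ ≤ max |e - e'| |v - v'| := fun t ht => by
    rw [Set.uIoc_of_le zero_le_one] at ht
    refine (abs_max_sub_max_le_max _ _ _ _).trans (max_le_max le_rfl ?_)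
    rw [← sub_mul, abs_mul, abs_of_pos ht.1]
    exact mul_le_of_le_one_right (abs_nonneg _) ht.2
  simpa using intervalIntegral.norm_integral_le_of_norm_le_const hbound

lemma searchValue_of_le {e v : ℝ} (he : 0 ≤ e) (hv : 0 < v) (h : e ≤ v) :
    searchValue e v = e + (v - e) ^ 2 / (2 * v) := by
  have h₀ : 0 ≤ e / v := by positivity
  have h₁ : e / v ≤ 1 := (div_le_one hv).2 h
  have hlow : ∫ t in (0 : ℝ)..(e / v), max e (v * t) = ∫ _ in (0 : ℝ)..(e / v), e :=
    intervalIntegral.integral_congr fun t ht => by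
      rw [Set.uIcc_of_le h₀] at ht
      exact max_eq_left ((le_div_iff₀' hv).1 ht.2)
  have hhigh : ∫ t in (e / v)..1, max e (v * t) = ∫ t in (e / v)..1, v * t :=
    intervalIntegral.integral_congr fun t ht => by
      rw [Set.uIcc_of_le h₁] at ht
      exact max_eq_right ((div_le_iff₀' hv).1 ht.1)
  rw [searchValue, ← intervalIntegral.integral_add_adjacent_intervals
    (intervalIntegrable_max_mul e v 0 (e / v)) (intervalIntegrable_max_mul e v (e / v) 1),
    hlow, hhigh, intervalIntegral.integral_const, intervalIntegral.integral_const_mul,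
    integral_id, smul_eq_mul]
  field_simp
  ring

lemma searchValue_of_ge {e v : ℝ} (hv : 0 ≤ v) (h : v ≤ e) : searchValue e v = e := by
  have hmax : searchValue e v = ∫ _ in (0 : ℝ)..1, e :=
    intervalIntegral.integral_congr fun t ht => by
      rw [Set.uIcc_of_le zero_le_one] at ht
      exact max_eq_left ((mul_le_of_le_one_right hv ht.2).trans h)
  simpa using hmax

lemma searchValue_eq {e v : ℝ} (he : 0 ≤ e) (hv : 0 < v) :
    searchValue e v = e + (v - min e v) ^ 2 / (2 * v) := by
  rcases le_total e v with h | h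
  · rw [searchValue_of_le he hv h, min_eq_left h]
  · rw [searchValue_of_ge hv.le h, min_eq_right h, sub_self]
    simp

end SearchValue

/-- A housing market over a set `ι` of seasons. `φ m` is the probability that a match survives into
season `m`, and `slope m * ε + intercept X m` is the value of a home of match quality `ε` when
movers have values `X`; the homeowner Bellman equation amounts to the two recursions. Values look
ahead along `next`, and vacancies are inherited along `prev`. -/
structure SeasonalMarket (ι : Type*) where
  (next prev : ι → ι)
  (β u : ℝ)
  (φ slope : ι → ℝ)
  (intercept : (ι → ℝ) → ι → ℝ)
  (β_nonneg : 0 ≤ β)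
  (β_lt_one : β < 1)
  (u_nonneg : 0 ≤ u)
  (φ_nonneg : ∀ m, 0 ≤ φ m)
  (φ_lt_one : ∀ m, φ m < 1)
  (slope_eq : ∀ m, slope m = 1 + β * φ (next m) * slope (next m))
  (intercept_eq : ∀ X m, intercept X m =
    β * (1 - φ (next m)) * X (next m) + β * φ (next m) * intercept X (next m))

namespace SeasonalMarket

variable {ι : Type*} (M : SeasonalMarket ι)

/-- The provisional reservation cutoff, at which a match is worth as much as further search. -/
noncomputable def cutoff (X : ι → ℝ) (m : ι) : ℝ :=
  (M.β * X (M.next m) + M.u - M.intercept X m) / M.slope m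

/-- The cutoff restricted to the support `[0, v m]` of match qualities. -/
noncomputable def clampedCutoff (X v : ι → ℝ) (m : ι) : ℝ :=
  min (max (M.cutoff X m) 0) (v m)

/-- The expected gain of a mover from this season's draw over waiting for the next season. -/
noncomputable def surplus (X v : ι → ℝ) (m : ι) : ℝ :=
  M.slope m / 2 * (v m - M.clampedCutoff X v m) ^ 2 / v m

/-- The map `T`, acting on pairs `(X, v)` of mover values and vacancy stocks, whose fixed points
are the market equilibria. -/
noncomputable def equilibriumMap (p : (ι → ℝ) × (ι → ℝ)) : (ι → ℝ) × (ι → ℝ) :=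
  (fun m => M.β * p.1 (M.next m) + M.u + M.surplus p.1 p.2 m,
    fun m => 1 - M.φ m + M.φ m * M.clampedCutoff p.1 p.2 (M.prev m))

/-- The equilibrium system with mover values eliminated: a map on pairs `(e, v)` of cutoffs and
vacancy stocks. -/
noncomputable def cutoffMap (q : (ι → ℝ) × (ι → ℝ)) : (ι → ℝ) × (ι → ℝ) :=
  (fun m => (M.u + M.β * M.φ (M.next m) * M.slope (M.next m) *
      searchValue (q.1 (M.next m)) (q.2 (M.next m))) / M.slope m,
    fun m => 1 - M.φ m + M.φ m * min (q.1 (M.prev m)) (q.2 (M.prev m)))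

/-- The box `K` of a priori bounds on mover values and vacancy stocks. -/
def box [Fintype ι] [Nonempty ι] : Set ((ι → ℝ) × (ι → ℝ)) :=
  let φmax := univ.sup' univ_nonempty M.φ
  let φmin := univ.inf' univ_nonempty M.φ
  let Amax := univ.sup' univ_nonempty M.slope
  let vhi := (1 - φmin) / (1 - φmax)
  {p | (∀ m, M.u / (1 - M.β) ≤ p.1 m ∧
      p.1 m ≤ M.u / (1 - M.β) + Amax * vhi / (2 * (1 - M.β))) ∧
    ∀ m, 1 - φmax ≤ p.2 m ∧ p.2 m ≤ vhi}

lemma β_mul_φ_nonneg (m : ι) : 0 ≤ M.β * M.φ m := mul_nonneg M.β_nonneg (M.φ_nonneg m)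

lemma β_mul_φ_lt_one (m : ι) : M.β * M.φ m < 1 :=
  mul_lt_one_of_nonneg_of_lt_one_left M.β_nonneg M.β_lt_one (M.φ_lt_one m).le

lemma surplus_eq {X v : ι → ℝ} {m : ι} (he : 0 ≤ M.cutoff X m) (hv : 0 < v m) :
    M.surplus X v m = M.slope m * (searchValue (M.cutoff X m) (v m) - M.cutoff X m) := by
  rw [surplus, clampedCutoff, max_eq_left he, searchValue_eq he hv]
  field_simp
  ring

section Finite

variable [Finite ι]

lemma one_le_slope (m : ι) : 1 ≤ M.slope m := by
  have hnonneg : ∀ m, 0 ≤ M.slope m :=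
    le_of_le_mul_comp_add M.next (fun m => M.β_mul_φ_nonneg (M.next m))
      (fun m => M.β_mul_φ_lt_one (M.next m)) (b := 0) (x := 0) (fun m => by simp)
      (fun m => by rw [M.slope_eq m, Pi.zero_apply]; linarith)
  rw [M.slope_eq m]
  linarith [mul_nonneg (M.β_mul_φ_nonneg (M.next m)) (hnonneg (M.next m))]

lemma slope_pos (m : ι) : 0 < M.slope m := zero_lt_one.trans_le (M.one_le_slope m)

lemma β_mul_φ_mul_slope_div_slope (m : ι) :
    M.β * M.φ (M.next m) * M.slope (M.next m) / M.slope m = 1 - 1 / M.slope m := by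
  rw [← sub_eq_iff_eq_add'.2 (M.slope_eq m), sub_div, div_self (M.slope_pos m).ne']

lemma nonneg_of_slope_mul_eq {e g : ι → ℝ} (hg : ∀ m, 0 ≤ g m)
    (he : ∀ m, M.slope m * e m = M.u + M.β * M.φ (M.next m) *
      (M.slope (M.next m) * e (M.next m) + g (M.next m))) (m : ι) : 0 ≤ e m := by
  have h : ∀ m, 0 ≤ M.slope m * e m :=
    le_of_le_mul_comp_add M.next (fun m => M.β_mul_φ_nonneg (M.next m))
      (fun m => M.β_mul_φ_lt_one (M.next m)) (b := 0) (x := 0)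
      (y := fun m => M.slope m * e m) (fun m => by simp) fun m => by
        have := mul_nonneg (M.β_mul_φ_nonneg (M.next m)) (hg (M.next m))
        rw [he m, Pi.zero_apply]
        linarith [M.u_nonneg]
  exact nonneg_of_mul_nonneg_right (h m) (M.slope_pos m)

lemma slope_mul_cutoff (X : ι → ℝ) (m : ι) :
    M.slope m * M.cutoff X m = M.u + M.β * M.φ (M.next m) *
      (M.slope (M.next m) * M.cutoff X (M.next m) +
        (X (M.next m) - (M.β * X (M.next (M.next m)) + M.u))) := by
  have h : ∀ k, M.slope k * M.cutoff X k = M.β * X (M.next k) + M.u - M.intercept X k :=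
    fun k => mul_div_cancel₀ _ (M.slope_pos k).ne'
  rw [h, h, M.intercept_eq X m]
  ring

lemma surplus_nonneg (X : ι → ℝ) {v : ι → ℝ} {m : ι} (hv : 0 ≤ v m) : 0 ≤ M.surplus X v m :=
  div_nonneg (mul_nonneg (half_pos (M.slope_pos m)).le (sq_nonneg _)) hv

lemma surplus_le (X : ι → ℝ) {v : ι → ℝ} {m : ι} (hv : 0 < v m) :
    M.surplus X v m ≤ M.slope m / 2 * v m := by
  have h₀ : 0 ≤ M.clampedCutoff X v m := le_min (le_max_right _ _) hv.le
  have h₁ : M.clampedCutoff X v m ≤ v m := min_le_right _ _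
  rw [surplus, mul_div_assoc]
  refine mul_le_mul_of_nonneg_left ?_ (half_pos (M.slope_pos m)).le
  rw [div_le_iff₀ hv]
  nlinarith

lemma vacancy_mem_Icc_of_isFixedPt {p : (ι → ℝ) × (ι → ℝ)}
    (h : Function.IsFixedPt M.equilibriumMap p) (m : ι) : p.2 m ∈ Set.Icc (1 - M.φ m) 1 :=
  vacancy_mem_Icc M.prev M.φ_nonneg M.φ_lt_one (fun _ => le_max_right _ 0)
    (fun k => (congrFun (congrArg Prod.snd h) k).symm) m

lemma vacancy_pos_of_isFixedPt {p : (ι → ℝ) × (ι → ℝ)}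
    (h : Function.IsFixedPt M.equilibriumMap p) (m : ι) : 0 < p.2 m :=
  (sub_pos.2 (M.φ_lt_one m)).trans_le (M.vacancy_mem_Icc_of_isFixedPt h m).1

lemma isFixedPt_cutoffMap_iff {q : (ι → ℝ) × (ι → ℝ)} :
    Function.IsFixedPt M.cutoffMap q ↔
      (∀ m, M.slope m * q.1 m = M.u + M.β * M.φ (M.next m) *
        (M.slope (M.next m) * searchValue (q.1 (M.next m)) (q.2 (M.next m)))) ∧
      ∀ m, q.2 m = 1 - M.φ m + M.φ m * min (q.1 (M.prev m)) (q.2 (M.prev m)) := by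
  rw [Function.IsFixedPt, Prod.ext_iff, funext_iff, funext_iff]
  refine and_congr (forall_congr' fun m => ?_) (forall_congr' fun m => eq_comm)
  rw [cutoffMap, div_eq_iff (M.slope_pos m).ne', eq_comm, mul_comm (q.1 m), mul_assoc (_ * _)]

lemma nonneg_pos_of_isFixedPt_cutoffMap {q : (ι → ℝ) × (ι → ℝ)}
    (h : Function.IsFixedPt M.cutoffMap q) : (∀ m, 0 ≤ q.1 m) ∧ ∀ m, 0 < q.2 m := by
  obtain ⟨he, hv⟩ := M.isFixedPt_cutoffMap_iff.1 h
  have hgain : ∀ m, 0 ≤ M.slope m * (searchValue (q.1 m) (q.2 m) - q.1 m) := fun m =>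
    mul_nonneg (M.slope_pos m).le (sub_nonneg.2 (le_searchValue _ _))
  have he₀ : ∀ m, 0 ≤ q.1 m := M.nonneg_of_slope_mul_eq hgain fun m => by rw [he m]; ring
  refine ⟨he₀, fun m => (sub_pos.2 (M.φ_lt_one m)).trans_le ?_⟩
  exact (vacancy_mem_Icc M.prev M.φ_nonneg M.φ_lt_one (fun k => he₀ (M.prev k)) hv m).1

lemma isFixedPt_cutoffMap_of_isFixedPt {X v : ι → ℝ}
    (h : Function.IsFixedPt M.equilibriumMap (X, v)) :
    Function.IsFixedPt M.cutoffMap (M.cutoff X, v) := by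
  have hv := M.vacancy_pos_of_isFixedPt h
  have hX : ∀ m, X m - (M.β * X (M.next m) + M.u) = M.surplus X v m := fun m =>
    sub_eq_iff_eq_add'.2 (congrFun (congrArg Prod.fst h) m).symm
  have he : ∀ m, 0 ≤ M.cutoff X m :=
    M.nonneg_of_slope_mul_eq (fun m => M.surplus_nonneg X (hv m).le) fun m => by
      rw [M.slope_mul_cutoff X m, hX]
  refine M.isFixedPt_cutoffMap_iff.2 ⟨fun m => ?_, fun m => ?_⟩
  · rw [M.slope_mul_cutoff X m, hX, M.surplus_eq (he _) (hv _)]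
    ring
  · have hvm : 1 - M.φ m + M.φ m * M.clampedCutoff X v (M.prev m) = v m :=
      congrFun (congrArg Prod.snd h) m
    refine hvm.symm.trans ?_
    rw [clampedCutoff, max_eq_left (he _)]

lemma exists_isFixedPt_of_cutoffMap {q : (ι → ℝ) × (ι → ℝ)}
    (h : Function.IsFixedPt M.cutoffMap q) :
    ∃ X, Function.IsFixedPt M.equilibriumMap (X, q.2) := by
  obtain ⟨he, hv⟩ := M.isFixedPt_cutoffMap_iff.1 h
  obtain ⟨he₀, hv₀⟩ := M.nonneg_pos_of_isFixedPt_cutoffMap h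
  obtain ⟨X, hX⟩ := exists_eq_mul_comp_add M.next (fun _ => M.β_nonneg) (fun _ => M.β_lt_one)
    fun m => M.u + M.slope m * (searchValue (q.1 m) (q.2 m) - q.1 m)
  have hscaled : (fun m => M.slope m * M.cutoff X m) = fun m => M.slope m * q.1 m :=
    eq_of_eq_mul_comp_add M.next (fun m => M.β_mul_φ_nonneg (M.next m))
      (fun m => M.β_mul_φ_lt_one (M.next m))
      (b := fun m => M.u + M.β * M.φ (M.next m) * (M.slope (M.next m) *
        (searchValue (q.1 (M.next m)) (q.2 (M.next m)) - q.1 (M.next m))))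
      (fun m => by rw [M.slope_mul_cutoff X m, hX (M.next m)]; ring)
      (fun m => by rw [he m]; ring)
  have hcut : ∀ m, M.cutoff X m = q.1 m := fun m =>
    mul_left_cancel₀ (M.slope_pos m).ne' (congrFun hscaled m)
  refine ⟨X, Prod.ext (funext fun m => ?_) (funext fun m => ?_)⟩
  · change M.β * X (M.next m) + M.u + M.surplus X q.2 m = X m
    rw [M.surplus_eq ((he₀ m).trans_eq (hcut m).symm) (hv₀ m), hcut, hX m]
    ring
  · change 1 - M.φ m + M.φ m * M.clampedCutoff X q.2 (M.prev m) = q.2 m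
    rw [clampedCutoff, hcut, max_eq_left (he₀ _), ← hv m]

lemma moverValue_eq_of_cutoff_eq {X X' v : ι → ℝ}
    (h : Function.IsFixedPt M.equilibriumMap (X, v))
    (h' : Function.IsFixedPt M.equilibriumMap (X', v)) (hcut : M.cutoff X = M.cutoff X') :
    X = X' := by
  have hsurplus : M.surplus X v = M.surplus X' v :=
    funext fun m => by rw [surplus, surplus, clampedCutoff, clampedCutoff, hcut]
  have hrec : ∀ {Y}, Function.IsFixedPt M.equilibriumMap (Y, v) →
      ∀ m, Y m = M.β * Y (M.next m) + (M.u + M.surplus Y v m) := fun hY m =>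
    (congrFun (congrArg Prod.fst hY) m).symm.trans (add_assoc _ _ _)
  exact eq_of_eq_mul_comp_add M.next (fun _ => M.β_nonneg) (fun _ => M.β_lt_one)
    (hrec h) (hsurplus ▸ hrec h')

end Finite

section Contraction

variable [Fintype ι]

lemma dist_cutoffMap_fst_le (p q : (ι → ℝ) × (ι → ℝ)) (m : ι) :
    dist ((M.cutoffMap p).1 m) ((M.cutoffMap q).1 m) ≤ (1 - 1 / M.slope m) * dist p q := by
  have hfactor : 0 ≤ 1 - 1 / M.slope m :=
    sub_nonneg.2 ((div_le_one (M.slope_pos m)).2 (M.one_le_slope m))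
  have hsearch := abs_searchValue_sub_le (p.1 (M.next m)) (p.2 (M.next m))
    (q.1 (M.next m)) (q.2 (M.next m))
  rw [Real.dist_eq, cutoffMap, cutoffMap, ← sub_div, add_sub_add_left_eq_sub, ← mul_sub,
    mul_div_right_comm, M.β_mul_φ_mul_slope_div_slope, abs_mul, abs_of_nonneg hfactor]
  exact mul_le_mul_of_nonneg_left (hsearch.trans
    (max_le_max (dist_le_pi_dist p.1 q.1 _) (dist_le_pi_dist p.2 q.2 _))) hfactor

lemma dist_cutoffMap_snd_le (p q : (ι → ℝ) × (ι → ℝ)) (m : ι) :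
    dist ((M.cutoffMap p).2 m) ((M.cutoffMap q).2 m) ≤ M.φ m * dist p q := by
  have hmin := abs_min_sub_min_le_max (p.1 (M.prev m)) (p.2 (M.prev m))
    (q.1 (M.prev m)) (q.2 (M.prev m))
  rw [Real.dist_eq, cutoffMap, cutoffMap, add_sub_add_left_eq_sub, ← mul_sub, abs_mul,
    abs_of_nonneg (M.φ_nonneg m)]
  exact mul_le_mul_of_nonneg_left (hmin.trans
    (max_le_max (dist_le_pi_dist p.1 q.1 _) (dist_le_pi_dist p.2 q.2 _))) (M.φ_nonneg m)

lemma exists_contractingWith_cutoffMap [Nonempty ι] : ∃ κ, ContractingWith κ M.cutoffMap := by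
  obtain ⟨k, hk⟩ := Finite.exists_max fun m => max (M.φ m) (1 - 1 / M.slope m)
  set κ := max (M.φ k) (1 - 1 / M.slope k)
  have hκ₀ : 0 ≤ κ := (M.φ_nonneg k).trans (le_max_left _ _)
  have hκ₁ : κ < 1 := max_lt (M.φ_lt_one k) (sub_lt_self _ (one_div_pos.2 (M.slope_pos k)))
  refine ⟨⟨κ, hκ₀⟩, hκ₁, LipschitzWith.of_dist_le_mul fun p q => ?_⟩
  have hdist : 0 ≤ κ * dist p q := mul_nonneg hκ₀ dist_nonneg
  refine max_le ((dist_pi_le_iff hdist).2 fun m => ?_) ((dist_pi_le_iff hdist).2 fun m => ?_)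
  · exact (M.dist_cutoffMap_fst_le p q m).trans
      (mul_le_mul_of_nonneg_right ((le_max_right _ _).trans (hk m)) dist_nonneg)
  · exact (M.dist_cutoffMap_snd_le p q m).trans
      (mul_le_mul_of_nonneg_right ((le_max_left _ _).trans (hk m)) dist_nonneg)

end Contraction

theorem existsUnique_isFixedPt_equilibriumMap [Finite ι] [Nonempty ι] :
    ∃! p, Function.IsFixedPt M.equilibriumMap p := by
  cases nonempty_fintype ι
  obtain ⟨κ, hκ⟩ := M.exists_contractingWith_cutoffMap
  refine existsUnique_of_exists_of_unique ?_ ?_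
  · obtain ⟨X, hX⟩ := M.exists_isFixedPt_of_cutoffMap hκ.fixedPoint_isFixedPt
    exact ⟨_, hX⟩
  · rintro ⟨X, v⟩ ⟨X', v'⟩ h h'
    obtain ⟨hcut, rfl⟩ := Prod.ext_iff.1 (hκ.fixedPoint_unique'
      (M.isFixedPt_cutoffMap_of_isFixedPt h) (M.isFixedPt_cutoffMap_of_isFixedPt h'))
    exact Prod.ext (M.moverValue_eq_of_cutoff_eq h h' hcut) rfl

lemma mem_box_of_isFixedPt [Fintype ι] [Nonempty ι] {p : (ι → ℝ) × (ι → ℝ)}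
    (h : Function.IsFixedPt M.equilibriumMap p) : p ∈ M.box := by
  let φmax := univ.sup' univ_nonempty M.φ
  let φmin := univ.inf' univ_nonempty M.φ
  let Amax := univ.sup' univ_nonempty M.slope
  let vhi := (1 - φmin) / (1 - φmax)
  have hφmax : ∀ m, M.φ m ≤ φmax := fun m => le_sup' M.φ (mem_univ m)
  have hφmin : ∀ m, φmin ≤ M.φ m := fun m => inf'_le M.φ (mem_univ m)
  have hAmax : ∀ m, M.slope m ≤ Amax := fun m => le_sup' M.slope (mem_univ m)
  have hvhi : 1 ≤ vhi := by
    have hpos : 0 < 1 - φmax := sub_pos.2 ((sup'_lt_iff _).2 fun m _ => M.φ_lt_one m)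
    obtain ⟨m⟩ := ‹Nonempty ι›
    exact (one_le_div hpos).2 (by linarith [hφmax m, hφmin m])
  have hv := M.vacancy_mem_Icc_of_isFixedPt h
  have hgain : ∀ m, M.u + M.surplus p.1 p.2 m ∈ Set.Icc M.u (M.u + Amax / 2 * vhi) := fun m => by
    have hvm := M.vacancy_pos_of_isFixedPt h m
    have hA : M.slope m / 2 * p.2 m ≤ Amax / 2 * vhi :=
      mul_le_mul (by linarith [hAmax m]) ((hv m).2.trans hvhi) hvm.le
        (by linarith [hAmax m, M.slope_pos m])
    exact ⟨by linarith [M.surplus_nonneg p.1 hvm.le], by linarith [M.surplus_le p.1 hvm]⟩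
  have hX := mem_Icc_of_eq_mul_comp_add M.next M.β_nonneg M.β_lt_one hgain fun m =>
    (congrFun (congrArg Prod.fst h) m).symm.trans (add_assoc _ _ _)
  have hXhi : (M.u + Amax / 2 * vhi) / (1 - M.β) =
      M.u / (1 - M.β) + Amax * vhi / (2 * (1 - M.β)) := by
    rw [add_div, div_mul_eq_mul_div, div_div]
  exact ⟨fun m => ⟨(hX m).1, (hX m).2.trans_eq hXhi⟩,
    fun m => ⟨by linarith [(hv m).1, hφmax m], (hv m).2.trans hvhi⟩⟩

end SeasonalMarket

section Calendar

variable {β : ℝ} {φ : ZMod 12 → ℝ}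

lemma prod_discounted (β : ℝ) (φ : ZMod 12 → ℝ) : ∏ j, β * φ j = β ^ 12 * Phi φ := by
  rw [prod_mul_distrib, prod_const, card_univ, ZMod.card, Phi]

lemma prod_discounted_lt_one (hβ : 0 < β ∧ β < 1) (hφ : ∀ m, 0 < φ m ∧ φ m < 1) :
    ∏ j, β * φ j < 1 := by
  have h := prod_lt_prod_of_nonempty (fun j _ => mul_pos hβ.1 (hφ j).1)
    (fun j _ => mul_lt_one_of_nonneg_of_lt_one_left hβ.1.le hβ.2 (hφ j).2.le)
    (univ_nonempty (α := ZMod 12))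
  rwa [prod_const_one] at h

lemma Aslope_eq_periodicSolution (β : ℝ) (φ : ZMod 12 → ℝ) :
    Aslope β φ = periodicSolution (fun m => β * φ m) 1 := by
  ext m
  rw [Aslope, periodicSolution, prod_discounted]
  simp only [prod_mul_distrib, prod_const, card_range, Pi.one_apply, mul_one]

lemma Dint_eq_periodicSolution (β : ℝ) (φ X : ZMod 12 → ℝ) :
    Dint β φ X =
      periodicSolution (fun m => β * φ m) fun m => β * (1 - φ (m + 1)) * X (m + 1) := by
  ext m
  rw [Dint, periodicSolution, prod_discounted, sum_div, ← Ico_add_one_right_eq_Icc,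
    sum_Ico_eq_sum_range]
  refine sum_congr rfl fun s _ => ?_
  simp only [wgt, prod_mul_distrib, prod_const, card_range, Nat.add_sub_cancel_left,
    Nat.cast_add, Nat.cast_one, add_comm (1 : ZMod 12), add_assoc]
  ring

/-- The twelve calendar months as a seasonal market, with the closed forms `Aslope` and `Dint`. -/
noncomputable def calendarMarket {u : ℝ} (hβ : 0 < β ∧ β < 1) (hu : 0 < u)
    (hφ : ∀ m, 0 < φ m ∧ φ m < 1) : SeasonalMarket (ZMod 12) where
  next := (· + 1)
  prev := (· - 1)
  β := β
  u := u
  φ := φ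
  slope := Aslope β φ
  intercept := Dint β φ
  β_nonneg := hβ.1.le
  β_lt_one := hβ.2
  u_nonneg := hu.le
  φ_nonneg m := (hφ m).1.le
  φ_lt_one m := (hφ m).2
  slope_eq m := by
    rw [Aslope_eq_periodicSolution]
    exact periodicSolution_eq (prod_discounted_lt_one hβ hφ).ne 1 m
  intercept_eq X m := by
    rw [Dint_eq_periodicSolution]
    exact periodicSolution_eq (prod_discounted_lt_one hβ hφ).ne _ m

end Calendar

theorem stmt14_general {ι : Type*} [Fintype ι] [Nonempty ι] (M : SeasonalMarket ι) :
    (∃! p, Function.IsFixedPt M.equilibriumMap p) ∧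
      ∀ p, Function.IsFixedPt M.equilibriumMap p → p ∈ M.box :=
  ⟨M.existsUnique_isFixedPt_equilibriumMap, fun _ => M.mem_box_of_isFixedPt⟩

/-- Existence and uniqueness of the 12-periodic housing market equilibrium: the
equilibrium map `T(X, v) = (X̃, ṽ)` has exactly one fixed point in the box `K`. -/
theorem stmt14 (β u : ℝ) (hβ : 0 < β ∧ β < 1) (hu : 0 < u) (φ : ZMod 12 → ℝ)
    (hφ : ∀ m, 0 < φ m ∧ φ m < 1) :
    let φmax := Finset.univ.sup' Finset.univ_nonempty φ
    let φmin := Finset.univ.inf' Finset.univ_nonempty φ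
    let Amax := Finset.univ.sup' Finset.univ_nonempty (Aslope β φ)
    let vlo := 1 - φmax
    let vhi := (1 - φmin) / (1 - φmax)
    let Xlo := u / (1 - β)
    let Xhi := u / (1 - β) + Amax * vhi / (2 * (1 - β))
    let K : Set ((ZMod 12 → ℝ) × (ZMod 12 → ℝ)) :=
      {p | (∀ m, Xlo ≤ p.1 m ∧ p.1 m ≤ Xhi) ∧ (∀ m, vlo ≤ p.2 m ∧ p.2 m ≤ vhi)}
    ∃! p : (ZMod 12 → ℝ) × (ZMod 12 → ℝ), p ∈ K ∧
      (fun m => XTilde β u φ p.1 p.2 m) = p.1 ∧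
      (fun m => vTilde β u φ p.1 p.2 m) = p.2 := by
  obtain ⟨⟨p, hp, hunique⟩, hbox⟩ := stmt14_general (calendarMarket hβ hu hφ)
  exact ⟨p, ⟨hbox p hp, Prod.ext_iff.1 hp⟩, fun q hq => hunique q (Prod.ext_iff.2 hq.2)⟩
end
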